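/- arXiv:0710.0163 — 4 statements merged into one kernel-verified Lean document; each statement's English description precedes it below -/
import Mathlib

section
/- Let V ⊆ ℂ be an open set, let D ⊆ V be dense in V, and let f : ℂ → ℂ be continuously real-differentiable on V (i.e., f is C¹ on V as a map of real vector spaces). If f is complex-differentiable at every point of D, then f is complex-differentiable at every point of V. -/
/-- If `f : ℂ → ℂ` is C¹ over ℝ on an open set `V` and complex-differentiable
at every point of a dense subset `D` of `V`, then `f` is complex-differentiable
at every point of `V`. -/
theorem holomorphic_of_c1_and_holomorphic_on_dense
    (V : Set ℂ) (hV : IsOpen V) (D : Set ℂ) (hDV : D ⊆ V)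
    (hdense : V ⊆ closure D)
    (f : ℂ → ℂ)
    (hdiff : ∀ z ∈ V, DifferentiableAt ℝ f z)
    (hcont : ContinuousOn (fun z => fderiv ℝ f z) V)
    (hD : ∀ z ∈ D, DifferentiableAt ℂ f z) :
    ∀ z ∈ V, DifferentiableAt ℂ f z := by
  have key : Set.EqOn (fun z => fderiv ℝ f z Complex.I)
      (fun z => Complex.I • fderiv ℝ f z 1) V := by
    refine Set.EqOn.of_subset_closure (s := D) ?_ ?_ ?_ hDV hdense
    · intro z hz
      exact (differentiableAt_complex_iff_differentiableAt_real.1 (hD z hz)).2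
    · exact hcont.clm_apply continuousOn_const
    · exact (hcont.clm_apply continuousOn_const).const_smul Complex.I
  intro z hz
  exact differentiableAt_complex_iff_differentiableAt_real.2 ⟨hdiff z hz, key hz⟩
end

section
/- Let V ⊆ ℂ be an open set, let E ⊆ ℂ be a compact set of two-dimensional Lebesgue measure zero, and let f : ℂ → ℂ be Lipschitz on V. If f is complex-differentiable at every point of V \ E, then f is complex-differentiable at every point of V. -/
open MeasureTheory

/-- Removability of compact Lebesgue-null sets for Lipschitz holomorphic
functions: if `f` is Lipschitz on an open set `V` and complex-differentiable
off a compact set `E` of two-dimensional Lebesgue measure zero, then `f` is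
complex-differentiable at every point of `V`. -/
theorem holomorphic_of_lipschitz_and_holomorphic_off_null_set
    (V : Set ℂ) (hV : IsOpen V) (E : Set ℂ) (hE : IsCompact E)
    (hE0 : volume E = 0)
    (f : ℂ → ℂ) (L : NNReal) (hf : LipschitzOnWith L f V)
    (hdiff : ∀ z ∈ V \ E, DifferentiableAt ℂ f z) :
    ∀ z ∈ V, DifferentiableAt ℂ f z := by
  intro z₀ hz₀
  obtain ⟨g, hg, hfg⟩ := hf.extend_finite_dimension
  set K := lipschitzExtensionConstant ℂ * L with hK
  have hgc : Continuous g := hg.continuous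
  have hgd : ∀ z ∈ V \ E, DifferentiableAt ℂ g z := fun z hz =>
    (hdiff z hz).congr_of_eventuallyEq
      ((Filter.eventually_of_mem (hV.mem_nhds hz.1) hfg).mono fun _ h => h.symm)
  obtain ⟨r, hr, hrV⟩ := Metric.isOpen_iff.mp hV z₀ hz₀
  have key : DifferentiableOn ℂ g (Metric.ball z₀ (r / 2)) := by
    let G : ℝ → ℂ → ℂ := fun ε x =>
      ((volume.real (Metric.ball (0 : ℂ) ε) : ℝ) : ℂ)⁻¹ * ∫ y in Metric.ball (0 : ℂ) ε, g (x + y)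
    have hint : ∀ (x : ℂ) (ε : ℝ),
        Integrable (fun y => g (x + y)) (volume.restrict (Metric.ball (0 : ℂ) ε)) := by
      intro x ε
      have hc : Continuous fun y => g (x + y) := by fun_prop
      exact (hc.continuousOn.integrableOn_compact (isCompact_closedBall (0 : ℂ) ε)).mono_set
        Metric.ball_subset_closedBall
    have hlim : TendstoLocallyUniformlyOn G g (nhdsWithin 0 (Set.Ioi 0))
        (Metric.ball z₀ (r / 2)) := by
      apply TendstoUniformlyOn.tendstoLocallyUniformlyOn
      rw [Metric.tendstoUniformlyOn_iff]
      intro η hη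
      have hKη : 0 < η / (K + 1) := by positivity
      filter_upwards [Ioo_mem_nhdsGT hKη] with ε hε x _
      have hc : 0 < volume.real (Metric.ball (0 : ℂ) ε) :=
        ENNReal.toReal_pos (Metric.measure_ball_pos _ _ hε.1).ne' measure_ball_lt_top.ne
      have hc' : ((volume.real (Metric.ball (0 : ℂ) ε) : ℝ) : ℂ) ≠ 0 := by
        exact_mod_cast hc.ne'
      have h1 : g x - G ε x = ((volume.real (Metric.ball (0 : ℂ) ε) : ℝ) : ℂ)⁻¹ *
          ∫ y in Metric.ball (0 : ℂ) ε, (g x - g (x + y)) := by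
        have hi : Integrable (fun _ : ℂ => g x) (volume.restrict (Metric.ball (0 : ℂ) ε)) :=
          integrableOn_const measure_ball_lt_top.ne
        rw [integral_sub hi (hint x ε), setIntegral_const, mul_sub]
        simp only [G, Complex.real_smul]
        rw [inv_mul_cancel_left₀ hc']
      have h2 : ‖∫ y in Metric.ball (0 : ℂ) ε, (g x - g (x + y))‖ ≤
          (K * ε) * volume.real (Metric.ball (0 : ℂ) ε) := by
        apply norm_setIntegral_le_of_norm_le_const measure_ball_lt_top
        intro y hy
        rw [← dist_eq_norm]
        refine (hg.dist_le_mul _ _).trans ?_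
        have : dist x (x + y) = ‖y‖ := by simp [dist_eq_norm]
        rw [this]
        have hy' : ‖y‖ < ε := by simpa using hy
        gcongr
      rw [dist_eq_norm, h1, norm_mul, norm_inv, Complex.norm_real, Real.norm_of_nonneg hc.le,
        inv_mul_lt_iff₀ hc]
      have h3 : K * ε < η := by
        have := (lt_div_iff₀ (by positivity : (0 : ℝ) < K + 1)).1 hε.2
        nlinarith [hε.1]
      refine h2.trans_lt ?_
      rw [mul_comm]
      gcongr
    refine hlim.differentiableOn ?_ Metric.isOpen_ball
    filter_upwards [Ioo_mem_nhdsGT (half_pos hr)] with ε hε x hx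
    refine DifferentiableAt.differentiableWithinAt ?_
    refine DifferentiableAt.const_mul ?_ _
    have hnull : ∀ᵐ y : ℂ, x + y ∉ E := by
      have : volume ((fun y => x + y) ⁻¹' E) = 0 := by
        rw [measure_preimage_add, hE0]
      exact measure_eq_zero_iff_ae_notMem.1 this
    refine (hasDerivAt_integral_of_dominated_loc_of_lip (F := fun x y => g (x + y))
      (F' := fun y => deriv g (x + y)) (bound := fun _ => (K : ℝ)) (s := Set.univ)
      Filter.univ_mem ?_ (hint x ε) ?_ ?_ (integrableOn_const measure_ball_lt_top.ne) ?_).2.differentiableAt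
    · exact Filter.Eventually.of_forall fun x => (hint x ε).aestronglyMeasurable
    · exact ((measurable_deriv g).comp (measurable_const_add x)).aestronglyMeasurable
    · refine Filter.Eventually.of_forall fun y => ?_
      have : Real.nnabs (K : ℝ) = K := by simp
      rw [this, lipschitzOnWith_univ]
      refine LipschitzWith.of_dist_le_mul fun a b => ?_
      simpa using hg.dist_le_mul (a + y) (b + y)
    · filter_upwards [ae_restrict_of_ae hnull, ae_restrict_mem measurableSet_ball] with y hy hyb
      refine HasDerivAt.comp_add_const x y (hgd (x + y) ⟨hrV ?_, hy⟩).hasDerivAt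
      have hy' : ‖y‖ < ε := by simpa using hyb
      rw [Metric.mem_ball, dist_eq_norm] at hx ⊢
      have : x + y - z₀ = (x - z₀) + y := by ring
      rw [this]
      linarith [norm_add_le (x - z₀) y, hε.2]
  have h := (key z₀ (Metric.mem_ball_self (half_pos hr))).differentiableAt
    (Metric.ball_mem_nhds z₀ (half_pos hr))
  exact h.congr_of_eventuallyEq (Filter.eventually_of_mem (hV.mem_nhds hz₀) hfg)
end

section
/- Let E ⊆ ℂ, p ∈ ℂ, and suppose there exist sequences (xₙ) and (yₙ) in E \ {p} converging to p and unit vectors u, v ∈ ℂ that are linearly independent over ℝ, such that (xₙ − p)/‖xₙ − p‖ → u and (yₙ − p)/‖yₙ − p‖ → v. If f, g : ℂ → ℂ are both Fréchet differentiable over ℝ at p and f z = g z for all z ∈ E ∪ {p}, then fderiv ℝ f p = fderiv ℝ g p. -/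
open Filter Topology

/-- If a set `E` approaches `p` in two real-linearly independent directions,
then the real Fréchet derivative at `p` of any function is determined by its
restriction to `E ∪ {p}`. -/
theorem fderiv_determined_by_nonflat_set
    (E : Set ℂ) (p : ℂ)
    (x y : ℕ → ℂ)
    (hx : ∀ n, x n ∈ E \ {p}) (hy : ∀ n, y n ∈ E \ {p})
    (hxp : Tendsto x atTop (𝓝 p)) (hyp : Tendsto y atTop (𝓝 p))
    (u v : ℂ) (hu : ‖u‖ = 1) (hv : ‖v‖ = 1)
    (huv : LinearIndependent ℝ ![u, v])
    (hxu : Tendsto (fun n => (x n - p) / (‖x n - p‖ : ℂ)) atTop (𝓝 u))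
    (hyv : Tendsto (fun n => (y n - p) / (‖y n - p‖ : ℂ)) atTop (𝓝 v))
    (f g : ℂ → ℂ)
    (hf : DifferentiableAt ℝ f p) (hg : DifferentiableAt ℝ g p)
    (hfg : ∀ z ∈ E ∪ {p}, f z = g z) :
    fderiv ℝ f p = fderiv ℝ g p := by
  have key : ∀ (x : ℕ → ℂ) (u : ℂ), (∀ n, x n ∈ E \ {p}) → Tendsto x atTop (𝓝 p) →
      Tendsto (fun n => (x n - p) / (‖x n - p‖ : ℂ)) atTop (𝓝 u) →
      fderiv ℝ f p u = fderiv ℝ g p u := by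
    intro x u hx hxp hxu
    have hd : Tendsto (fun n => x n - p) atTop (𝓝 0) := by
      simpa using hxp.sub_const p
    have hc : Tendsto (fun n => (‖x n - p‖⁻¹ : ℝ) • (x n - p)) atTop (𝓝 u) := by
      refine hxu.congr fun n => ?_
      rw [Complex.real_smul, Complex.ofReal_inv, div_eq_inv_mul]
    have h1 := (hasFDerivWithinAt_univ.2 hf.hasFDerivAt).lim hd
      (Eventually.of_forall fun _ => Set.mem_univ _) hc
    have h2 := (hasFDerivWithinAt_univ.2 hg.hasFDerivAt).lim hd
      (Eventually.of_forall fun _ => Set.mem_univ _) hc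
    refine tendsto_nhds_unique h1 (h2.congr fun n => ?_)
    rw [add_sub_cancel, hfg (x n) (Or.inl (hx n).1), hfg p (Or.inr rfl)]
  have hspan : Submodule.span ℝ (Set.range ![u, v]) = ⊤ :=
    huv.span_eq_top_of_card_eq_finrank (by simp [Complex.finrank_real_complex])
  have hlin : (fderiv ℝ f p : ℂ →ₗ[ℝ] ℂ) = (fderiv ℝ g p : ℂ →ₗ[ℝ] ℂ) := by
    refine LinearMap.ext_on_range hspan fun i => ?_
    fin_cases i
    · exact key x u hx hxp hxu
    · exact key y v hy hyp hyv
  exact ContinuousLinearMap.coe_injective hlin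
end

section
/- Let U ⊆ ℂ be a nonempty bounded open set whose frontier E = frontier U is connected, let V ⊆ ℂ be open with closure(U) ⊆ V, and let f : ℂ → ℂ be continuously real-differentiable on V (Fréchet differentiable over ℝ at each point of V with z ↦ fderiv ℝ f z continuous on V). Suppose U₁ and U₂ are nonempty disjoint open sets with U₁ ∪ U₂ = U, f is complex-differentiable at every point of U₁, and z ↦ conj(f z) is complex-differentiable at every point of U₂. Then there exists a point p ∈ closure(U₁) ∩ closure(U₂) with fderiv ℝ f p = 0. -/
/-- If `U` is a nonempty bounded open set with connected frontier, `f` is C¹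
over ℝ on a neighborhood `V` of `closure U`, and `U` is partitioned into
nonempty disjoint open sets `U₁`, `U₂` on which `f` is respectively
holomorphic and conjugate-holomorphic, then there is a common closure point
of `U₁` and `U₂` at which the real derivative of `f` vanishes. -/
theorem exists_fderiv_zero_of_mixed_orientations
    (U : Set ℂ) (hU : IsOpen U) (hUne : U.Nonempty)
    (hUb : Bornology.IsBounded U)
    (hfr : IsPreconnected (frontier U))
    (V : Set ℂ) (hV : IsOpen V) (hUV : closure U ⊆ V)
    (f : ℂ → ℂ)
    (hdiff : ∀ z ∈ V, DifferentiableAt ℝ f z)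
    (hcont : ContinuousOn (fun z => fderiv ℝ f z) V)
    (U₁ U₂ : Set ℂ) (hU₁ : IsOpen U₁) (hU₂ : IsOpen U₂)
    (hne₁ : U₁.Nonempty) (hne₂ : U₂.Nonempty)
    (hdisj : Disjoint U₁ U₂) (hunion : U₁ ∪ U₂ = U)
    (h₁ : ∀ z ∈ U₁, DifferentiableAt ℂ f z)
    (h₂ : ∀ z ∈ U₂, DifferentiableAt ℂ (fun w => (starRingEnd ℂ) (f w)) z) :
    ∃ p ∈ closure U₁ ∩ closure U₂, fderiv ℝ f p = 0 := by
  have hUn : ∀ W : Set ℂ, W.Nonempty → W ⊆ U → (frontier W).Nonempty := by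
    intro W hW hWU
    rw [nonempty_frontier_iff]
    refine ⟨hW, ?_⟩
    intro h
    have hb : Bornology.IsBounded (Set.univ : Set ℂ) := h ▸ hUb.subset hWU
    exact NormedSpace.unbounded_univ ℝ ℂ hb
  have hs₁ : U₁ ⊆ U := hunion ▸ Set.subset_union_left
  have hs₂ : U₂ ⊆ U := hunion ▸ Set.subset_union_right
  have key : ∃ p, p ∈ closure U₁ ∧ p ∈ closure U₂ := by
    obtain ⟨a, ha⟩ := hUn U₁ hne₁ hs₁
    obtain ⟨b, hb⟩ := hUn U₂ hne₂ hs₂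
    rw [hU₁.frontier_eq] at ha
    rw [hU₂.frontier_eq] at hb
    have ha' : a ∈ frontier U := by
      rw [hU.frontier_eq]
      refine ⟨closure_mono hs₁ ha.1, ?_⟩
      rw [← hunion]
      rintro (h | h)
      · exact ha.2 h
      · exact Set.disjoint_left.1 (hdisj.closure_left hU₂) ha.1 h
    have hb' : b ∈ frontier U := by
      rw [hU.frontier_eq]
      refine ⟨closure_mono hs₂ hb.1, ?_⟩
      rw [← hunion]
      rintro (h | h)
      · exact Set.disjoint_left.1 (hdisj.closure_right hU₁) h hb.1
      · exact hb.2 h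
    obtain ⟨p, -, hp⟩ := isPreconnected_closed_iff.1 hfr (closure U₁) (closure U₂)
      isClosed_closure isClosed_closure
      (by rw [← closure_union, hunion]; exact frontier_subset_closure)
      ⟨a, ha', ha.1⟩ ⟨b, hb', hb.1⟩
    exact ⟨p, hp⟩
  obtain ⟨p, hp₁, hp₂⟩ := key
  refine ⟨p, ⟨hp₁, hp₂⟩, ?_⟩
  have hpV : p ∈ V := hUV (closure_mono hs₁ hp₁)
  have hc : ContinuousAt (fun z => fderiv ℝ f z) p := hcont.continuousAt (hV.mem_nhds hpV)
  have hcI : ContinuousAt (fun z => fderiv ℝ f z Complex.I) p := hc.clm_apply continuousAt_const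
  have hc1 : ContinuousAt (fun z => fderiv ℝ f z 1) p := hc.clm_apply continuousAt_const
  have lim : ∀ (W : Set ℂ) (g : ℂ → ℂ), ContinuousAt g p → p ∈ closure W →
      (∀ z ∈ W, g z = 0) → g p = 0 := by
    intro W g hg hpW h0
    have := hg.continuousWithinAt.mem_closure (t := {0}) hpW (fun z hz => h0 z hz)
    simpa using this
  have e₁ := lim U₁ (fun z => fderiv ℝ f z Complex.I - Complex.I * fderiv ℝ f z 1)
    (hcI.sub (continuousAt_const.mul hc1)) hp₁ (by
      intro z hz
      have h := (h₁ z hz).hasFDerivAt.restrictScalars ℝ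
      have h' := (fderiv ℂ f z).map_smul Complex.I 1
      simp only [smul_eq_mul, mul_one] at h'
      simp only [h.fderiv, ContinuousLinearMap.coe_restrictScalars', h', sub_self])
  have e₂ := lim U₂ (fun z => fderiv ℝ f z Complex.I + Complex.I * fderiv ℝ f z 1)
    (hcI.add (continuousAt_const.mul hc1)) hp₂ (by
      intro z hz
      have h := (h₂ z hz).hasFDerivAt.restrictScalars ℝ
      have hf : HasFDerivAt f _ z :=
        (hdiff z (hUV (subset_closure (hs₂ hz)))).hasFDerivAt
      have hf2 := (Complex.conjCLE : ℂ →L[ℝ] ℂ).hasFDerivAt.comp z hf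
      have hu := hf2.unique h
      have h' := (fderiv ℂ (fun w => (starRingEnd ℂ) (f w)) z).map_smul Complex.I 1
      simp only [smul_eq_mul, mul_one] at h'
      have u1 := DFunLike.congr_fun hu 1
      have uI := DFunLike.congr_fun hu Complex.I
      simp only [ContinuousLinearMap.coe_restrictScalars'] at u1 uI
      rw [h', ← u1] at uI
      have := congrArg (starRingEnd ℂ) uI
      simp at this
      simp [this])
  have hI : fderiv ℝ f p Complex.I = 0 := by linear_combination (e₁ + e₂) / 2
  have h1 : fderiv ℝ f p 1 = 0 := by
    have : Complex.I * fderiv ℝ f p 1 = 0 := by linear_combination (e₂ - e₁) / 2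
    exact (mul_eq_zero.1 this).resolve_left Complex.I_ne_zero
  ext x
  have hx : x = x.re • (1 : ℂ) + x.im • Complex.I := by
    simp [Complex.re_add_im]
  rw [hx, map_add, map_smul, map_smul, h1, hI]
  simp
end
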